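/- arXiv:1604.08283 — 2 statements merged into one kernel-verified Lean document; each statement's English description precedes it below -/
import Mathlib

section
/- Let (A,b) be a unital A∞-algebra over a field k of characteristic 0, and let P ∈ Hom_k((A[1])^{⊗p},A[1]) and Q ∈ Hom_k((A[1])^{⊗q},A[1]) be homogeneous normalized Hochschild cochains of degrees |P| and |Q| in C^•(A). Then, as operators on the Hochschild chain complex C_•(A), one has L_{[P,Q]} = L_P∘L_Q − (−1)^{(|P|−1)(|Q|−1)} L_Q∘L_P, where [P,Q] is the Gerstenhaber bracket. -/
open Finsupp
open scoped Classical

namespace NC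

variable (S : Type) [CommRing S] {κ : Type}

/-- The sign `(−1)^n` for `n : ℤ`. -/
noncomputable def sgn (n : ℤ) : S := if Even n then 1 else -1

/-- Degree of a basis element of `A` (the unit `none` = `1_A` has degree `0`). -/
def dgO (dg : κ → ℤ) : Option κ → ℤ := fun x => x.elim 0 dg

/-- `A`: a graded vector space with homogeneous basis `Option κ` (`none` = the unit `1_A`,
`some x` of degree `dg x`). -/
abbrev Avs (κ : Type) (S : Type) [CommRing S] := Option κ →₀ S

/-- Hochschild chains `C_•(A) = A ⊗ B(Ā)`, with basis `a₀ ⊗ [a₁|…|aₙ]`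
(`a₀` a basis element of `A`, the `aᵢ` basis elements of `Ā`). -/
abbrev Cch (κ : Type) (S : Type) [CommRing S] := (Option κ × List κ) →₀ S

variable (dg : κ → ℤ)

/-- `ε` of a list of `A`-basis elements: `Σ (|a|−1)`. -/
def epsO : List (Option κ) → ℤ := fun ls => (ls.map fun x => dgO dg x - 1).sum

/-- `ε` of a list of `Ā`-basis elements: `εᵢ = Σ_{r≤i} (|a_r|−1)`. -/
def epsK : List κ → ℤ := fun ms => (ms.map fun x => dg x - 1).sum

/-- `μ_j = |a₀|−1+ε_j`. -/
def muK (a₀ : Option κ) (ms : List κ) (j : ℕ) : ℤ :=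
  dgO dg a₀ - 1 + epsK dg (ms.take j)

/-- A (component family of a) Hochschild cochain is a function on basis words; `HasArity P p`
says it is concentrated in arity `p`. -/
def HasArity (P : List (Option κ) → Avs κ S) (p : ℕ) : Prop :=
  ∀ ls, ls.length ≠ p → P ls = 0

/-- Normalized cochain: vanishes as soon as one entry is the unit `1_A`. -/
def IsNormalized (P : List (Option κ) → Avs κ S) : Prop :=
  ∀ ls, none ∈ ls → P ls = 0

/-- Homogeneous of degree `dP` in `C^•(A)`: `P[a₁|…|aₚ]` has degree `Σ(|aᵢ|−1) + dP`. -/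
def IsHomog (P : List (Option κ) → Avs κ S) (dP : ℤ) : Prop :=
  ∀ ls x, x ∈ (P ls).support → dgO dg x = epsO dg ls + dP

/-- Multilinear insertion of a general vector of `A` into a slot of a cochain. -/
noncomputable def insEval (P : List (Option κ) → Avs κ S) (pre : List (Option κ))
    (v : Avs κ S) (post : List (Option κ)) : Avs κ S :=
  v.sum fun x c => c • P (pre ++ x :: post)

/-- The Gerstenhaber insertion `P∘Q`, the inner cochain `Q` being of `C^•`-degree `dQ`:
`(P∘Q)[a₁|…|aₙ] = Σ (−1)^{(|Q|−1)ε_i} P[a₁|…|a_i|Q[a_{i+1}|…|a_{i+v}]|…|aₙ]`. -/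
noncomputable def circC (P Q : List (Option κ) → Avs κ S) (dQ : ℤ) :
    List (Option κ) → Avs κ S := fun ls =>
  ∑ i ∈ Finset.range (ls.length + 1), ∑ v ∈ Finset.range (ls.length + 1),
    if i + v ≤ ls.length then
      sgn S ((dQ - 1) * epsO dg (ls.take i)) •
        insEval S P (ls.take i) (Q ((ls.drop i).take v)) (ls.drop (i + v))
    else 0

/-- Gerstenhaber bracket `[P,Q] = P∘Q − (−1)^{(|P|−1)(|Q|−1)} Q∘P`. -/
noncomputable def gBr (P Q : List (Option κ) → Avs κ S) (dP dQ : ℤ) :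
    List (Option κ) → Avs κ S := fun ls =>
  circC S dg P Q dQ ls - sgn S ((dP - 1) * (dQ - 1)) • circC S dg Q P dP ls

/-- `v ⊗ [ms]` for a general vector `v` of `A` in the module slot of `C_•(A)`. -/
noncomputable def genA (v : Avs κ S) (ms : List κ) : Cch κ S :=
  v.sum fun x c => Finsupp.single (x, ms) c

/-- `a₀ ⊗ [pre | v̄ | post]` for a general vector `v` of `A` inserted in a bar slot (the class
of the unit `1_A` in `Ā = A/k·1_A` being zero). -/
noncomputable def genBar (a₀ : Option κ) (pre : List κ) (v : Avs κ S) (post : List κ) :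
    Cch κ S :=
  v.sum fun x c => Option.elim x 0 fun y => Finsupp.single (a₀, pre ++ y :: post) c

/-- The value of the operator `L_P` on the generator `a₀ ⊗ [a₁|…|aₙ]`:
`L_P(a₀⊗[a₁|…|aₙ]) = Σ (−1)^{(|P|−1)μ_j} a₀⊗[a₁|…|a_j|P[a_{j+1}|…|a_{j+l}]|…|aₙ]
 + Σ (−1)^{μ_i(μ_n−μ_i)} s⁻¹P([a_{i+1}|…|aₙ|a₀|…|a_j]) ⊗ [a_{j+1}|…|a_i]`
(the second sum over the cyclic terms in which `P` includes `a₀`). -/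
noncomputable def Lgen (P : List (Option κ) → Avs κ S) (dP : ℤ)
    (a₀ : Option κ) (ms : List κ) : Cch κ S :=
  (∑ j ∈ Finset.range (ms.length + 1), ∑ l ∈ Finset.range (ms.length + 1),
    if j + l ≤ ms.length then
      sgn S ((dP - 1) * muK dg a₀ ms j) •
        genBar S a₀ (ms.take j) (P (((ms.drop j).take l).map some)) (ms.drop (j + l))
    else 0)
  + ∑ i ∈ Finset.range (ms.length + 1), ∑ j ∈ Finset.range (ms.length + 1),
      if j ≤ i then
        sgn S (muK dg a₀ ms i * (muK dg a₀ ms ms.length - muK dg a₀ ms i)) •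
          genA S (P ((ms.drop i).map some ++ a₀ :: (ms.take j).map some))
            ((ms.drop j).take (i - j))
      else 0

/-- The operator `L_P : C_•(A) → C_•(A)` associated to a cochain `P` of `C^•`-degree `dP`. -/
noncomputable def Lop (P : List (Option κ) → Avs κ S) (dP : ℤ) : Cch κ S →ₗ[S] Cch κ S :=
  Finsupp.lift (Cch κ S) S (Option κ × List κ) fun g => Lgen S dg P dP g.1 g.2

/-- The Hochschild boundary `∂_Hoch` of the (curved) A∞-structure `b` (a degree `2` cochain):
it is given on generators by exactly the formula `L_b`. -/
noncomputable def hochOp (b : List (Option κ) → Avs κ S) : Cch κ S →ₗ[S] Cch κ S :=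
  Lop S dg b 2

/-- `a ⊗ [ls]` where the bar entries are allowed to be unit basis elements (which die in
`Ā`). -/
noncomputable def genO (a : Option κ) (ls : List (Option κ)) : Cch κ S :=
  if none ∈ ls then 0 else Finsupp.single (a, ls.reduceOption) 1

/-- Connes' operator `B` on generators:
`B(a₀⊗[a₁|…|aₙ]) = Σᵢ (−1)^{(ε_{i−1}+|a₀|−1)(ε_n−ε_{i−1})} 1_A⊗[a_i|…|aₙ|a₀|a₁|…|a_{i−1}]`. -/
noncomputable def Bgen (a₀ : Option κ) (ms : List κ) : Cch κ S :=
  ∑ i ∈ Finset.range (ms.length + 1),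
    sgn S ((epsK dg (ms.take (i - 1)) + dgO dg a₀ - 1) *
        (epsK dg ms - epsK dg (ms.take (i - 1)))) •
      genO S none (((a₀ :: ms.map some).drop i) ++ ((a₀ :: ms.map some).take i))

/-- Connes' operator `B : C_•(A) → C_•(A)`. -/
noncomputable def Bop : Cch κ S →ₗ[S] Cch κ S :=
  Finsupp.lift (Cch κ S) S (Option κ × List κ) fun g => Bgen S dg g.1 g.2

/-- A unital curved A∞-structure on `A` (components `b` of the degree `1` coderivation `b` of
`BA`, written with values in `A`): homogeneity, `b∘b = 0`, and the unit axioms. -/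
structure IsUnitalCurvedAInf (b : List (Option κ) → Avs κ S) : Prop where
  homog : IsHomog S dg b 2
  sq : ∀ ls, circC S dg b b 2 ls = 0
  unit1 : b [none] = 0
  unitR : ∀ x : Option κ, b [x, none] = sgn S (dgO dg x) • Finsupp.single x 1
  unitL : ∀ x : Option κ, b [none, x] = Finsupp.single x 1
  unitHi : ∀ ls, 3 ≤ ls.length → none ∈ ls → b ls = 0

/-- A unital A∞-structure: a unital curved A∞-structure with `b₀ = 0`. -/
structure IsUnitalAInf (b : List (Option κ) → Avs κ S) extends
    IsUnitalCurvedAInf S dg b : Prop where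
  curv0 : b [] = 0

end NC


namespace NC

section Splits

variable {α M N : Type}

/-- Sum over all splittings of a list in two pieces. -/
def S2 [AddCommMonoid M] : (List α → List α → M) → List α → M
  | F, [] => F [] []
  | F, a :: w => F [] (a :: w) + S2 (fun x y => F (a :: x) y) w

/-- Sum over all splittings of a list in three pieces. -/
def S3 [AddCommMonoid M] (F : List α → List α → List α → M) (w : List α) : M :=
  S2 (fun x r => S2 (fun y z => F x y z) r) w

/-- Sum over all splittings of a list in five pieces. -/
def S5 [AddCommMonoid M] (F : List α → List α → List α → List α → List α → M) (w : List α) : M :=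
  S3 (fun x y r => S3 (fun z u v => F x y z u v) r) w

theorem S2_add [AddCommMonoid M] (F G : List α → List α → M) (w : List α) :
    S2 (fun x y => F x y + G x y) w = S2 F w + S2 G w := by
  induction w generalizing F G with
  | nil => rfl
  | cons a w ih => simp only [S2, ih]; abel

theorem S3_add [AddCommMonoid M] (F G : List α → List α → List α → M) (w : List α) :
    S3 (fun x y z => F x y z + G x y z) w = S3 F w + S3 G w := by
  simp only [S3, S2_add]

theorem S2_map [AddCommMonoid M] [AddCommMonoid N] (f : M →+ N) (F : List α → List α → M)
    (w : List α) : f (S2 F w) = S2 (fun x y => f (F x y)) w := by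
  induction w generalizing F with
  | nil => rfl
  | cons a w ih => simp only [S2, ih, map_add]

theorem S3_map [AddCommMonoid M] [AddCommMonoid N] (f : M →+ N)
    (F : List α → List α → List α → M)
    (w : List α) : f (S3 F w) = S3 (fun x y z => f (F x y z)) w := by
  simp only [S3, S2_map]

theorem S5_map [AddCommMonoid M] [AddCommMonoid N] (f : M →+ N)
    (F : List α → List α → List α → List α → List α → M)
    (w : List α) : f (S5 F w) = S5 (fun x y z u v => f (F x y z u v)) w := by
  simp only [S5, S3_map]

theorem S2_coassoc [AddCommMonoid M] (F : List α → List α → List α → M) (w : List α) :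
    S2 (fun l z => S2 (fun x y => F x y z) l) w = S3 F w := by
  induction w generalizing F with
  | nil => rfl
  | cons a w ih =>
    simp only [S3] at ih
    simp only [S3, S2, S2_add, ih]
    abel

theorem S2_S3 [AddCommMonoid M] (F : List α → List α → List α → List α → M) (w : List α) :
    S2 (fun l z => S3 (fun x y u => F x y u z) l) w = S2 (fun x r => S3 (F x) r) w := by
  calc _ = S2 (fun l z => S2 (fun x r => S2 (fun y u => F x y u z) r) l) w := rfl
    _ = S3 (fun x r z => S2 (fun y u => F x y u z) r) w :=
        S2_coassoc (fun x r z => S2 (fun y u => F x y u z) r) w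
    _ = S2 (fun x r => S2 (fun l z => S2 (fun y u => F x y u z) l) r) w := rfl
    _ = _ := by simp only [S2_coassoc]

theorem S3_last [AddCommMonoid M] (F : List α → List α → List α → List α → List α → M)
    (w : List α) :
    S3 (fun x y z => S3 (fun z1 u v => F x y z1 u v) z) w = S5 F w := rfl

theorem S3_first [AddCommMonoid M] (F : List α → List α → List α → List α → List α → M)
    (w : List α) :
    S3 (fun x y z => S3 (fun x1 x2 x3 => F x1 x2 x3 y z) x) w = S5 F w := by
  calc _ = S2 (fun x r => S2 (fun y z => S3 (fun x1 x2 x3 => F x1 x2 x3 y z) x) r) w := rfl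
    _ = S2 (fun x r => S3 (fun x1 x2 x3 => S2 (fun y z => F x1 x2 x3 y z) r) x) w := by
        congr 1; funext x r
        induction r using List.rec generalizing F with
        | nil => rfl
        | cons a r ih => 
          simp only [S2, S3_add]
          rw [ih (fun x1 x2 x3 y z => F x1 x2 x3 (a :: y) z)]
    _ = S2 (fun x1 r => S3 (fun x2 x3 r => S2 (fun y z => F x1 x2 x3 y z) r) r) w :=
        S2_S3 (fun x1 x2 x3 r => S2 (fun y z => F x1 x2 x3 y z) r) w
    _ = _ := rfl

theorem S3_mid [AddCommMonoid M] (F : List α → List α → List α → List α → List α → M)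
    (w : List α) :
    S3 (fun x y z => S3 (fun y1 y2 y3 => F x y1 y2 y3 z) y) w = S5 F w := by
  calc _ = S2 (fun x r => S2 (fun y z => S3 (fun y1 y2 y3 => F x y1 y2 y3 z) y) r) w := rfl
    _ = S2 (fun x r => S2 (fun y1 r => S3 (F x y1) r) r) w := by
        congr 1; funext x r
        exact S2_S3 (fun y1 y2 y3 z => F x y1 y2 y3 z) r
    _ = _ := rfl

theorem S2_comm' [AddCommMonoid M] (F : List α → List α → List α → List α → M) (w w' : List α) :
    S2 (fun x y => S2 (fun x' y' => F x y x' y') w') w =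
      S2 (fun x' y' => S2 (fun x y => F x y x' y') w) w' := by
  induction w generalizing F with
  | nil => rfl
  | cons a w ih =>
    simp only [S2, S2_add]
    rw [ih (fun x y x' y' => F (a :: x) y x' y')]

theorem S3_outer [AddCommMonoid M] (F : List α → List α → List α → List α → List α → M)
    (w : List α) :
    S3 (fun x y z => S2 (fun x1 x2 => S2 (fun z1 z2 => F x1 x2 y z1 z2) z) x) w = S5 F w := by
  calc _ = S2 (fun x r => S2 (fun y z => S2 (fun x1 x2 => S2 (fun z1 z2 => F x1 x2 y z1 z2) z) x)
              r) w := rfl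
    _ = S2 (fun x r => S2 (fun x1 x2 => S3 (fun y z1 z2 => F x1 x2 y z1 z2) r) x) w := by
        congr 1; funext x r
        exact S2_comm' (fun y z x1 x2 => S2 (fun z1 z2 => F x1 x2 y z1 z2) z) r x
    _ = S3 (fun x1 x2 r => S3 (fun y z1 z2 => F x1 x2 y z1 z2) r) w :=
        S2_coassoc (fun x1 x2 r => S3 (fun y z1 z2 => F x1 x2 y z1 z2) r) w
    _ = _ := rfl

theorem S2_mid [AddCommMonoid M] (F : List α → List α → M) (x : List α) (c : α) (z : List α) :
    S2 F (x ++ c :: z) = S2 (fun x1 x2 => F x1 (x2 ++ c :: z)) x +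
      S2 (fun z1 z2 => F (x ++ c :: z1) z2) z := by
  induction x generalizing F with
  | nil => rfl
  | cons a x ih => simp only [S2, List.cons_append, ih]; abel

theorem S3_cut [AddCommMonoid M] (F : List α → List α → List α → M) (x : List α) (c : α)
    (z : List α) :
    S3 F (x ++ c :: z) = S3 (fun x1 x2 x3 => F x1 x2 (x3 ++ c :: z)) x +
      S2 (fun x1 x2 => S2 (fun z1 z2 => F x1 (x2 ++ c :: z1) z2) z) x +
      S3 (fun z1 z2 z3 => F (x ++ c :: z1) z2 z3) z := by
  simp only [S3, S2_mid, S2_add]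

theorem S2_eq [AddCommMonoid M] (F : List α → List α → M) (w : List α) :
    S2 F w = ∑ i ∈ Finset.range (w.length + 1), F (w.take i) (w.drop i) := by
  induction w generalizing F with
  | nil => simp [S2]
  | cons a w ih =>
    rw [List.length_cons, Finset.sum_range_succ' _ (w.length + 1), add_comm]
    simp [S2, ih]

theorem S2_listmap {β : Type} [AddCommMonoid M] (g : β → α) (F : List α → List α → M)
    (w : List β) : S2 F (w.map g) = S2 (fun x y => F (x.map g) (y.map g)) w := by
  induction w generalizing F with
  | nil => rfl
  | cons a w ih => simp [S2, ih]

theorem S3_listmap {β : Type} [AddCommMonoid M] (g : β → α) (F : List α → List α → List α → M)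
    (w : List β) :
    S3 F (w.map g) = S3 (fun x y z => F (x.map g) (y.map g) (z.map g)) w := by
  simp only [S3, S2_listmap]

theorem S3_eq1 [AddCommMonoid M] (F : List α → List α → List α → M) (w : List α) :
    (∑ i ∈ Finset.range (w.length + 1), ∑ v ∈ Finset.range (w.length + 1),
      if i + v ≤ w.length then F (w.take i) ((w.drop i).take v) (w.drop (i + v)) else 0) =
    S3 F w := by
  simp only [S3, S2_eq]
  refine Finset.sum_congr rfl fun i hi => ?_
  rw [← Finset.sum_filter]
  refine Finset.sum_congr ?_ fun v hv => ?_
  · ext v; simp at hi ⊢; omega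
  · rw [List.drop_drop]

theorem S3_eq2 [AddCommMonoid M] (F : List α → List α → List α → M) (w : List α) :
    (∑ i ∈ Finset.range (w.length + 1), ∑ j ∈ Finset.range (w.length + 1),
      if j ≤ i then F (w.take j) ((w.drop j).take (i - j)) (w.drop i) else 0) =
    S3 F w := by
  rw [← S2_coassoc]
  simp only [S2_eq]
  refine Finset.sum_congr rfl fun i hi => ?_
  rw [← Finset.sum_filter]
  refine Finset.sum_congr ?_ fun j hj => ?_
  · ext v; simp at hi ⊢; omega
  · simp at hj
    rw [List.take_take, List.drop_take, min_eq_left hj.1]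

theorem S2_zero [AddCommMonoid M] (F : List α → List α → M) (w : List α)
    (h : ∀ x y, w = x ++ y → F x y = 0) : S2 F w = 0 := by
  rw [S2_eq]
  exact Finset.sum_eq_zero fun i _ => h _ _ (List.take_append_drop i w).symm

theorem S3_zero [AddCommMonoid M] (F : List α → List α → List α → M) (w : List α)
    (h : ∀ x y z, w = x ++ y ++ z → F x y z = 0) : S3 F w = 0 := by
  refine S2_zero _ _ fun x r h1 => S2_zero _ _ fun y z h2 => h x y z ?_
  rw [h1, h2, List.append_assoc]

theorem S2_congr [AddCommMonoid M] {F G : List α → List α → M} {w : List α}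
    (h : ∀ x y, w = x ++ y → F x y = G x y) : S2 F w = S2 G w := by
  simp only [S2_eq]
  exact Finset.sum_congr rfl fun i _ => h _ _ (List.take_append_drop i w).symm

theorem S3_congr [AddCommMonoid M] {F G : List α → List α → List α → M} {w : List α}
    (h : ∀ x y z, w = x ++ (y ++ z) → F x y z = G x y z) : S3 F w = S3 G w := by
  refine S2_congr fun x r h1 => S2_congr fun y z h2 => h x y z ?_
  rw [h1, h2]

end Splits

section Main

variable {k : Type} [Field k] {κ : Type} (dg : κ → ℤ)

/-- Linear extension of a function on basis elements of `A`. -/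
noncomputable def II {M : Type} [AddCommMonoid M] [Module k M] (f : Option κ → M) :
    Avs κ k →ₗ[k] M := Finsupp.linearCombination k f

variable {M : Type} [AddCommMonoid M] [Module k M]

theorem II_apply (f : Option κ → M) (v : Avs κ k) : II f v = v.sum fun c r => r • f c := rfl

theorem II_add (f g : Option κ → M) (v : Avs κ k) :
    II (fun c => f c + g c) v = II f v + II g v := by
  simp only [II_apply, smul_add, Finsupp.sum_add]

theorem II_smul (s : k) (f : Option κ → M) (v : Avs κ k) :
    II (fun c => s • f c) v = s • II f v := by
  simp only [II_apply, Finsupp.smul_sum, smul_comm s]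

/-- `II` as an additive map in the function. -/
noncomputable def IIf (v : Avs κ k) : (Option κ → M) →+ M where
  toFun f := II f v
  map_zero' := by simp [II_apply]
  map_add' f g := II_add f g v

theorem II_S2 {α : Type} (F : Option κ → List α → List α → M) (v : Avs κ k) (w : List α) :
    II (fun c => S2 (F c) w) v = S2 (fun x y => II (fun c => F c x y) v) w := by
  have h : (fun c => S2 (F c) w) = S2 (fun x y => fun c => F c x y) w := by
    funext c
    exact (S2_map (Pi.evalAddMonoidHom (fun _ : Option κ => M) c) (fun x y => fun c => F c x y) w).symm
  rw [h]
  exact S2_map (N := M) (IIf v) _ w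

theorem II_S3 {α : Type} (F : Option κ → List α → List α → List α → M) (v : Avs κ k)
    (w : List α) :
    II (fun c => S3 (F c) w) v = S3 (fun x y z => II (fun c => F c x y z) v) w := by
  simp only [S3, II_S2]

theorem II_II {N : Type} [AddCommMonoid N] [Module k N] (T : M →ₗ[k] N) (f : Option κ → M)
    (v : Avs κ k) : T (II f v) = II (fun c => T (f c)) v := by
  simp only [II_apply, map_finsuppSum, map_smul]

theorem II_swap (f : Option κ → Option κ → M) (v w : Avs κ k) :
    II (fun c => II (fun d => f c d) w) v = II (fun d => II (fun c => f c d) v) w := by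
  simp only [II_apply, Finsupp.smul_sum]
  rw [Finsupp.sum_comm]
  refine Finsupp.sum_congr fun d _ => Finsupp.sum_congr fun c _ => ?_
  rw [smul_comm]

theorem sgn_mul (m n : ℤ) : sgn k m * sgn k n = sgn k (m + n) := by
  simp only [sgn, Int.even_add]
  by_cases hm : Even m <;> by_cases hn : Even n <;> simp [hm, hn]

theorem sgn_congr {m n : ℤ} (h : (m : ZMod 2) = n) : sgn k m = sgn k n := by
  have : Even m ↔ Even n := by
    rw [← ZMod.intCast_eq_zero_iff_even, ← ZMod.intCast_eq_zero_iff_even, h]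
  simp only [sgn, this]

theorem epsO_append (x y : List (Option κ)) : epsO dg (x ++ y) = epsO dg x + epsO dg y := by
  simp [epsO]

theorem epsO_cons (c : Option κ) (y : List (Option κ)) :
    epsO dg (c :: y) = dgO dg c - 1 + epsO dg y := by
  simp [epsO]

theorem epsO_some (x : List κ) : epsO dg (x.map some) = epsK dg x := by
  simp [epsO, epsK, dgO, Function.comp_def]

theorem II_homog {Q : List (Option κ) → Avs κ k} {dQ : ℤ} (hQ : IsHomog k dg Q dQ)
    (e : Option κ → ℤ) (f : Option κ → M) (ls : List (Option κ)) (n : ℤ)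
    (h : ∀ c, dgO dg c = epsO dg ls + dQ → e c = n) :
    II (fun c => sgn k (e c) • f c) (Q ls) = sgn k n • II f (Q ls) := by
  rw [← II_smul]
  simp only [II_apply]
  refine Finsupp.sum_congr fun c hc => ?_
  rw [h c (hQ ls c hc)]

theorem S2_smul {α : Type} (s : k) (F : List α → List α → M) (w : List α) :
    s • S2 F w = S2 (fun x y => s • F x y) w :=
  S2_map (DistribSMul.toAddMonoidHom M s) F w

theorem S3_smul {α : Type} (s : k) (F : List α → List α → List α → M) (w : List α) :
    s • S3 F w = S3 (fun x y z => s • F x y z) w :=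
  S3_map (DistribSMul.toAddMonoidHom M s) F w

theorem S5_smul {α : Type} (s : k) (F : List α → List α → List α → List α → List α → M)
    (w : List α) :
    s • S5 F w = S5 (fun x y z u v => s • F x y z u v) w :=
  S5_map (DistribSMul.toAddMonoidHom M s) F w

/-- The operator `L_P` on words whose bar entries may be units. -/
noncomputable def LO (P : List (Option κ) → Avs κ k) (dP : ℤ) (a : Option κ)
    (w : List (Option κ)) : Cch κ k :=
  S3 (fun x y z => sgn k ((dP - 1) * (dgO dg a - 1 + epsO dg x)) •
    II (fun c => genO k a (x ++ c :: z)) (P y)) w +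
  S3 (fun x y z => sgn k ((dgO dg a - 1 + epsO dg x + epsO dg y) * epsO dg z) •
    II (fun c => genO k c y) (P (z ++ a :: x))) w

theorem reduceOption_map_some (x : List κ) : (x.map some).reduceOption = x := by
  induction x with
  | nil => rfl
  | cons a x ih => simp [ih]

theorem genO_some (a : Option κ) (x : List κ) :
    genO k a (x.map some) = Finsupp.single (a, x) 1 := by
  simp [genO, reduceOption_map_some]

theorem genO_none (a : Option κ) (x : List (Option κ)) (h : none ∈ x) :
    genO k a x = 0 := by
  simp [genO, h]

theorem genA_eq (v : Avs κ k) (ms : List κ) :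
    genA k v ms = II (fun c => genO k c (ms.map some)) v := by
  simp [genA, II_apply, genO_some]

theorem genBar_eq (a : Option κ) (pre : List κ) (v : Avs κ k) (post : List κ) :
    genBar k a pre v post = II (fun c => genO k a (pre.map some ++ c :: post.map some)) v := by
  simp only [genBar, II_apply]
  refine Finsupp.sum_congr fun c _ => ?_
  cases c with
  | none => rw [genO_none _ _ (by simp)]; simp
  | some y =>
    have : pre.map some ++ some y :: post.map some = (pre ++ y :: post).map some := by simp
    rw [this, genO_some]; simp

theorem Lgen_eq (F : List (Option κ) → Avs κ k) (d : ℤ) (a : Option κ) (ms : List κ) :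
    Lgen k dg F d a ms = LO dg F d a (ms.map some) := by
  rw [LO, S3_listmap, S3_listmap, ← S3_eq1, ← S3_eq2, Lgen]
  refine congrArg₂ (fun s t => s + t) ?_ ?_
  · refine Finset.sum_congr rfl fun i hi => Finset.sum_congr rfl fun j hj => ?_
    simp only [genBar_eq, muK, epsO_some]
  · refine Finset.sum_congr rfl fun i hi => Finset.sum_congr rfl fun j hj => ?_
    split_ifs with h
    · have h1 : epsK dg (ms.take i) = epsK dg (ms.take j) + epsK dg ((ms.drop j).take (i - j)) := by
        have : ms.take i = ms.take j ++ (ms.drop j).take (i - j) := by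
          conv_lhs => rw [show i = j + (i - j) by omega]
          rw [List.take_add]
        rw [this]; simp [epsK]
      have h2 : epsK dg ms = epsK dg (ms.take i) + epsK dg (ms.drop i) := by
        conv_lhs => rw [← List.take_append_drop i ms]
        simp [epsK]
      simp only [genA_eq, muK, epsO_some, List.take_length]
      rw [h2, h1]
      congr 2
      ring
    · rfl

theorem Lop_genO {P : List (Option κ) → Avs κ k} (hP : IsNormalized k P) (d : ℤ)
    (a : Option κ) (w : List (Option κ)) :
    Lop k dg P d (genO k a w) = LO dg P d a w := by
  by_cases h : none ∈ w
  · rw [genO_none _ _ h, map_zero, LO, S3_zero, S3_zero, add_zero]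
    · rintro x y z rfl
      by_cases hy : none ∈ y
      · simp [genO_none _ _ hy, II_apply]
      · rw [hP, map_zero, smul_zero]
        simp at h ⊢; tauto
    · rintro x y z rfl
      by_cases hy : none ∈ y
      · rw [hP _ hy, map_zero, smul_zero]
      · have : ∀ c : Option κ, genO k a (x ++ c :: z) = 0 := fun c =>
          genO_none _ _ (by simp at h ⊢; tauto)
        simp [this, II_apply]
  · obtain ⟨ms, rfl⟩ : ∃ ms : List κ, w = ms.map some := by
      induction w with
      | nil => exact ⟨[], rfl⟩
      | cons c w ih =>
        simp at h
        obtain ⟨ms, rfl⟩ := ih h.2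
        cases c with
        | none => simp at h
        | some c => exact ⟨c :: ms, rfl⟩
    rw [genO_some, ← Lgen_eq]
    simp [Lop]

theorem circC_eq (P Q : List (Option κ) → Avs κ k) (dQ : ℤ) (w : List (Option κ)) :
    circC k dg P Q dQ w = S3 (fun x y z => sgn k ((dQ - 1) * epsO dg x) •
      II (fun c => P (x ++ c :: z)) (Q y)) w := by
  rw [← S3_eq1]; rfl

theorem LO_sub (P Q : List (Option κ) → Avs κ k) (s : k) (d : ℤ) (a : Option κ)
    (w : List (Option κ)) :
    LO dg (fun l => P l - s • Q l) d a w = LO dg P d a w - s • LO dg Q d a w := by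
  rw [eq_sub_iff_add_eq]
  simp only [LO, smul_add, S3_smul]
  rw [add_add_add_comm, ← S3_add, ← S3_add]
  congr 2
  · funext x y z
    rw [map_sub, map_smul, smul_comm s, ← smul_add, sub_add_cancel]
  · funext x y z
    rw [map_sub, map_smul, smul_comm s, ← smul_add, sub_add_cancel]

section Terms

variable (P Q : List (Option κ) → Avs κ k) (a : Option κ)

/-- `a ⊗ [x|Q(y)|z|P(u)|v]`. -/
noncomputable def tA (x y z u v : List (Option κ)) : Cch κ k :=
  II (fun c => II (fun d => genO k a (x ++ c :: (z ++ d :: v))) (P u)) (Q y)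

/-- `a ⊗ [x|P(y|Q(z)|u)|v]`. -/
noncomputable def tN (x y z u v : List (Option κ)) : Cch κ k :=
  II (fun c => II (fun d => genO k a (x ++ d :: v)) (P (y ++ c :: u))) (Q z)

/-- `P(v|a|x) ⊗ [y|Q(z)|u]`. -/
noncomputable def tC (x y z u v : List (Option κ)) : Cch κ k :=
  II (fun c => II (fun d => genO k d (y ++ c :: u)) (P (v ++ a :: x))) (Q z)

/-- `P(v|a|x|Q(y)|z) ⊗ [u]`. -/
noncomputable def tR (x y z u v : List (Option κ)) : Cch κ k :=
  II (fun c => II (fun d => genO k d u) (P (v ++ a :: (x ++ c :: z)))) (Q y)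

/-- `P(z|Q(u)|v|a|x) ⊗ [y]`. -/
noncomputable def tL (x y z u v : List (Option κ)) : Cch κ k :=
  II (fun c => II (fun d => genO k d y) (P (z ++ c :: (v ++ a :: x)))) (Q u)

/-- `P(u|Q(v|a|x)|y) ⊗ [z]`. -/
noncomputable def tM (x y z u v : List (Option κ)) : Cch κ k :=
  II (fun c => II (fun d => genO k d z) (P (u ++ c :: y))) (Q (v ++ a :: x))

/-- The degree of a word. -/
local notation "ε" => epsO dg

theorem LO_circ (dP dQ : ℤ) (w : List (Option κ)) :
    LO dg (circC k dg P Q dQ) (dP + dQ - 1) a w =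
    S5 (fun x y z u v => sgn k ((dP + dQ - 1 - 1) * (dgO dg a - 1 + ε x) + (dQ - 1) * ε y) •
      tN P Q a x y z u v) w +
    (S5 (fun x y z u v => sgn k ((dgO dg a - 1 + ε x + ε y) * (ε z + (ε u + ε v)) +
        (dQ - 1) * ε z) • tL P Q a x y z u v) w +
    S5 (fun x y z u v => sgn k ((dgO dg a - 1 + (ε x + ε y) + ε z) * (ε u + ε v) +
        (dQ - 1) * ε u) • tM P Q a x y z u v) w +
    S5 (fun x y z u v => sgn k ((dgO dg a - 1 + (ε x + (ε y + ε z)) + ε u) * ε v +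
        (dQ - 1) * (ε v + (dgO dg a - 1 + ε x))) • tR P Q a x y z u v) w) := by
  rw [LO]
  refine congrArg₂ (fun s t => s + t) ?_ ?_
  · rw [← S3_mid]
    refine S3_congr fun x y z _ => ?_
    rw [circC_eq]
    erw [S3_map (LinearMap.toAddMonoidHom (II (fun c => genO k a (x ++ c :: z))))]
    rw [S3_smul]
    refine S3_congr fun y1 y2 y3 _ => ?_
    simp only [LinearMap.toAddMonoidHom_coe, map_smul, II_II, smul_smul, sgn_mul]
    rfl
  · rw [← S3_last (fun x y z u v => _ • tL P Q a x y z u v), ← S3_outer,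
      ← S3_first, ← S3_add, ← S3_add]
    refine S3_congr fun x y z _ => ?_
    rw [circC_eq]
    erw [S3_map (LinearMap.toAddMonoidHom (II (fun c => genO k c y)))]
    rw [S3_smul, S3_cut]
    rw [S2_comm']
    refine congrArg₂ (fun s t => s + t) (congrArg₂ (fun s t => s + t) ?_ ?_) ?_
    · refine S3_congr fun z1 z2 z3 h => ?_
      subst h
      simp only [LinearMap.toAddMonoidHom_coe, map_smul, II_II, smul_smul, sgn_mul, epsO_append]
      rfl
    · refine S2_congr fun x1 x2 h => S2_congr fun z1 z2 h' => ?_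
      subst h h'
      simp only [LinearMap.toAddMonoidHom_coe, map_smul, II_II, smul_smul, sgn_mul, epsO_append]
      rfl
    · refine S3_congr fun x1 x2 x3 h => ?_
      subst h
      simp only [LinearMap.toAddMonoidHom_coe, map_smul, II_II, smul_smul, sgn_mul, epsO_append,
        epsO_cons, List.append_assoc, List.cons_append]
      rfl

/-- The part of `L_P ∘ L_Q` where `P` and `Q` are applied to disjoint subwords. -/
noncomputable def RR (dP dQ : ℤ) (w : List (Option κ)) : Cch κ k :=
  S5 (fun x y z u v => sgn k ((dQ - 1) * (dgO dg a - 1 + (ε x + (ε y + ε z))) +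
      (dP - 1) * (dgO dg a - 1 + ε x)) • tA Q P a x y z u v) w +
  S5 (fun x y z u v => sgn k ((dQ - 1) * (dgO dg a - 1 + ε x) +
      (dP - 1) * (dgO dg a - 1 + (ε x + (ε y + dQ - 1 + ε z)))) • tA P Q a x y z u v) w +
  S5 (fun x y z u v => sgn k ((dQ - 1) * (dgO dg a - 1 + (ε x + ε y)) +
      (dgO dg a - 1 + ε x + (ε y + (ε z + dQ - 1 + ε u))) * ε v) • tC P Q a x y z u v) w +
  S5 (fun x y z u v => sgn k ((dgO dg a - 1 + ε x + (ε y + (ε z + ε u))) * ε v +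
      (dP - 1) * (ε v + (dgO dg a - 1 + ε x) + dQ - 1 + ε y)) • tC Q P a x y z u v) w

theorem RR_symm (dP dQ : ℤ) (w : List (Option κ)) :
    RR dg P Q a dP dQ w = sgn k ((dP - 1) * (dQ - 1)) • RR dg Q P a dQ dP w := by
  simp only [RR, smul_add, S5_smul, smul_smul, sgn_mul]
  have perm : ∀ A B C D : Cch κ k, A + B + C + D = B + A + D + C := fun A B C D => by abel
  refine (perm _ _ _ _).trans ?_
  refine congrArg₂ (fun s t => s + t) (congrArg₂ (fun s t => s + t)
    (congrArg₂ (fun s t => s + t) ?_ ?_) ?_) ?_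
  all_goals
    congr 1
    funext x y z u v
    congr 1
    refine sgn_congr ?_
    push_cast
    grind

theorem II_LO {P Q : List (Option κ) → Avs κ k} (dP dQ : ℤ)
    (hQ : IsHomog k dg Q dQ) (x y z : List (Option κ)) :
    II (fun c => LO dg P dP a (x ++ c :: z)) (Q y) =
    S3 (fun x1 x2 x3 => sgn k ((dP - 1) * (dgO dg a - 1 + ε x1)) • tA Q P a x1 x2 x3 y z) x +
    S2 (fun x1 x2 => S2 (fun z1 z2 => sgn k ((dP - 1) * (dgO dg a - 1 + ε x1)) •
      tN P Q a x1 x2 y z1 z2) z) x +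
    S3 (fun z1 z2 z3 => sgn k ((dP - 1) * (dgO dg a - 1 + (ε x + (ε y + dQ - 1 + ε z1)))) •
      tA P Q a x y z1 z2 z3) z +
    (S3 (fun x1 x2 x3 => sgn k ((dgO dg a - 1 + ε x1 + ε x2) * (ε x3 + (ε y + dQ - 1 + ε z))) •
      tL P Q a x1 x2 x3 y z) x +
    S2 (fun x1 x2 => S2 (fun z1 z2 =>
      sgn k ((dgO dg a - 1 + ε x1 + (ε x2 + (ε y + dQ - 1 + ε z1))) * ε z2) •
      tC P Q a x1 x2 y z1 z2) z) x +
    S3 (fun z1 z2 z3 => sgn k ((dgO dg a - 1 + (ε x + (ε y + dQ - 1 + ε z1)) + ε z2) * ε z3) •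
      tR P Q a x y z1 z2 z3) z) := by
  simp only [LO, S3_cut, II_add, II_S3, II_S2, epsO_append, epsO_cons, List.append_assoc,
    List.cons_append]
  refine congrArg₂ (fun s t => s + t) (congrArg₂ (fun s t => s + t)
    (congrArg₂ (fun s t => s + t) ?_ ?_) ?_) (congrArg₂ (fun s t => s + t)
    (congrArg₂ (fun s t => s + t) ?_ ?_) ?_)
  · refine S3_congr fun x1 x2 x3 _ => ?_
    rw [II_smul, II_swap]; rfl
  · refine S2_congr fun x1 x2 _ => S2_congr fun z1 z2 _ => ?_
    rw [II_smul]; rfl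
  · refine S3_congr fun x1 x2 x3 _ => ?_
    exact II_homog dg hQ _ _ y _ fun c hc => by rw [hc]
  · refine S3_congr fun x1 x2 x3 _ => ?_
    exact II_homog dg hQ _ _ y _ fun c hc => by rw [hc]
  · refine S2_congr fun x1 x2 _ => S2_congr fun z1 z2 _ => ?_
    exact II_homog dg hQ _ _ y _ fun c hc => by rw [hc]
  · refine S3_congr fun x1 x2 x3 _ => ?_
    exact II_homog dg hQ _ _ y _ fun c hc => by rw [hc]

theorem II_LO' {P Q : List (Option κ) → Avs κ k} (dP dQ : ℤ)
    (hQ : IsHomog k dg Q dQ) (x y z : List (Option κ)) :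
    II (fun c => LO dg P dP c y) (Q (z ++ a :: x)) =
    S3 (fun y1 y2 y3 => sgn k ((dP - 1) * (ε z + (dgO dg a - 1 + ε x) + dQ - 1 + ε y1)) •
      tC Q P a x y1 y2 y3 z) y +
    S3 (fun y1 y2 y3 => sgn k ((ε z + (dgO dg a - 1 + ε x) + dQ - 1 + ε y1 + ε y2) * ε y3) •
      tM P Q a x y1 y2 y3 z) y := by
  simp only [LO, II_add, II_S3]
  refine congrArg₂ (fun s t => s + t) ?_ ?_
  · refine S3_congr fun x1 x2 x3 _ => ?_
    rw [tC, II_swap]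
    exact II_homog dg hQ _ _ _ _ fun c hc => by rw [hc, epsO_append, epsO_cons]
  · refine S3_congr fun x1 x2 x3 _ => ?_
    exact II_homog dg hQ _ _ _ _ fun c hc => by rw [hc, epsO_append, epsO_cons]

theorem Lop_LO {P Q : List (Option κ) → Avs κ k} (dP dQ : ℤ) (hP : IsNormalized k P)
    (hQ : IsHomog k dg Q dQ) (w : List (Option κ)) :
    Lop k dg P dP (LO dg Q dQ a w) =
      LO dg (circC k dg P Q dQ) (dP + dQ - 1) a w + RR dg P Q a dP dQ w := by
  have e1 : Lop k dg P dP (LO dg Q dQ a w) =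
      S3 (fun x y z => sgn k ((dQ - 1) * (dgO dg a - 1 + ε x)) •
        II (fun c => LO dg P dP a (x ++ c :: z)) (Q y)) w +
      S3 (fun x y z => sgn k ((dgO dg a - 1 + ε x + ε y) * ε z) •
        II (fun c => LO dg P dP c y) (Q (z ++ a :: x))) w := by
    rw [LO, map_add]
    refine congrArg₂ (fun s t => s + t)
      ((S3_map (Lop k dg P dP).toAddMonoidHom _ w).trans ?_)
      ((S3_map (Lop k dg P dP).toAddMonoidHom _ w).trans ?_)
    · refine S3_congr fun x y z _ => ?_
      simp only [LinearMap.toAddMonoidHom_coe, map_smul, II_II, Lop_genO dg hP]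
    · refine S3_congr fun x y z _ => ?_
      simp only [LinearMap.toAddMonoidHom_coe, map_smul, II_II, Lop_genO dg hP]
  rw [e1, LO_circ, RR]
  simp only [II_LO dg a dP dQ hQ, II_LO' dg a dP dQ hQ, smul_add, S3_add]
  have perm : ∀ A N A' L C R C' M : Cch κ k, A + N + A' + (L + C + R) + (C' + M) =
    N + (L + M + R) + (A + A' + C + C') := fun A N A' L C R C' M => by abel
  refine (perm _ _ _ _ _ _ _ _).trans ?_
  refine congrArg₂ (fun s t => s + t) (congrArg₂ (fun s t => s + t) ?_
    (congrArg₂ (fun s t => s + t) (congrArg₂ (fun s t => s + t) ?_ ?_) ?_))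
    (congrArg₂ (fun s t => s + t) (congrArg₂ (fun s t => s + t)
    (congrArg₂ (fun s t => s + t) ?_ ?_) ?_) ?_)
  · rw [← S3_outer]
    refine S3_congr fun x y z _ => ?_
    simp only [S2_smul, smul_smul, sgn_mul]
    refine S2_congr fun x1 x2 h => S2_congr fun z1 z2 h' => ?_
    subst h h'
    congr 1
    refine sgn_congr ?_
    simp only [epsO_append]
    push_cast
    grind
  · rw [← S3_first]
    refine S3_congr fun x y z _ => ?_
    simp only [S3_smul, smul_smul, sgn_mul]
    refine S3_congr fun x1 x2 x3 h => ?_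
    subst h
    congr 1
    refine sgn_congr ?_
    simp only [epsO_append]
    push_cast
    grind
  · rw [← S3_mid]
    refine S3_congr fun x y z _ => ?_
    simp only [S3_smul, smul_smul, sgn_mul]
    refine S3_congr fun x1 x2 x3 h => ?_
    subst h
    congr 1
    refine sgn_congr ?_
    simp only [epsO_append]
    push_cast
    grind
  · rw [← S3_last]
    refine S3_congr fun x y z _ => ?_
    simp only [S3_smul, smul_smul, sgn_mul]
    refine S3_congr fun x1 x2 x3 h => ?_
    subst h
    congr 1
    refine sgn_congr ?_
    push_cast
    grind
  · rw [← S3_first]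
    refine S3_congr fun x y z _ => ?_
    simp only [S3_smul, smul_smul, sgn_mul]
    refine S3_congr fun x1 x2 x3 h => ?_
    subst h
    congr 1
    refine sgn_congr ?_
    simp only [epsO_append]
  · rw [← S3_last]
    refine S3_congr fun x y z _ => ?_
    simp only [S3_smul, smul_smul, sgn_mul]
  · rw [← S3_outer]
    refine S3_congr fun x y z _ => ?_
    simp only [S2_smul, smul_smul, sgn_mul]
    refine S2_congr fun x1 x2 h => S2_congr fun z1 z2 h' => ?_
    subst h h'
    congr 1
    refine sgn_congr ?_
    simp only [epsO_append]
  · rw [← S3_mid]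
    refine S3_congr fun x y z _ => ?_
    simp only [S3_smul, smul_smul, sgn_mul]
    refine S3_congr fun x1 x2 x3 h => ?_
    subst h
    congr 1
    refine sgn_congr ?_
    simp only [epsO_append]

end Terms

end Main

end NC

open NC in
/-- Let `(A,b)` be a unital A∞-algebra over a field `k` of characteristic `0`
(realized on a graded vector space with homogeneous basis `Option κ`, the unit `1_A` being
the basis element `none`), and let `P`, `Q` be homogeneous normalized Hochschild cochains of
arities `p`, `q` and degrees `dP = |P|`, `dQ = |Q|` in `C^•(A)`.  Then, as operators on the
Hochschild chain complex `C_•(A)`,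
`L_{[P,Q]} = L_P ∘ L_Q − (−1)^{(|P|−1)(|Q|−1)} L_Q ∘ L_P`,
where `[P,Q]` is the Gerstenhaber bracket. -/
theorem statement0 {k : Type} [Field k] [CharZero k] {κ : Type} (dg : κ → ℤ)
    (b : List (Option κ) → Avs κ k) (hb : IsUnitalAInf k dg b)
    (P Q : List (Option κ) → Avs κ k) (p q : ℕ) (dP dQ : ℤ)
    (hPa : HasArity k P p) (hPn : IsNormalized k P) (hPh : IsHomog k dg P dP)
    (hQa : HasArity k Q q) (hQn : IsNormalized k Q) (hQh : IsHomog k dg Q dQ) :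
    Lop k dg (gBr k dg P Q dP dQ) (dP + dQ - 1) =
      Lop k dg P dP ∘ₗ Lop k dg Q dQ -
        sgn k ((dP - 1) * (dQ - 1)) • (Lop k dg Q dQ ∘ₗ Lop k dg P dP) := by
  ext1 ⟨a, ms⟩
  ext1
  simp only [LinearMap.comp_apply, LinearMap.sub_apply, LinearMap.smul_apply,
    Finsupp.lsingle_apply]
  rw [← genO_some]
  rw [Lop_genO dg hPn, Lop_genO dg hQn]
  rw [Lop_LO dg a dP dQ hPn hQh, Lop_LO dg a dQ dP hQn hPh, RR_symm dg P Q]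
  have h1 : Lop k dg (gBr k dg P Q dP dQ) (dP + dQ - 1) (genO k a (ms.map some)) =
      LO dg (gBr k dg P Q dP dQ) (dP + dQ - 1) a (ms.map some) := by
    rw [genO_some, ← Lgen_eq]
    simp [Lop]
  have h2 : LO dg (gBr k dg P Q dP dQ) (dP + dQ - 1) a (ms.map some) =
      LO dg (circC k dg P Q dQ) (dP + dQ - 1) a (ms.map some) -
      sgn k ((dP - 1) * (dQ - 1)) • LO dg (circC k dg Q P dP) (dP + dQ - 1) a (ms.map some) :=
    LO_sub dg _ _ _ _ _ _
  rw [h1, h2, smul_add, add_sub_add_right_eq_sub, add_comm dQ dP]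
end

section
/- Let (A,b) be a unital curved A∞-algebra over a field k of characteristic 0 and Ā = A/k·1_A. The map S_{312}∘(1_A⊗Δ_{BĀ}) : A⊗BĀ → BĀ⊗A⊗BĀ, which sends a⊗[a_1|…|a_n] to Σ_{i=0}^{n}(−1)^{(ε_i+|a|)(ε_n−ε_i)}[a_{i+1}|…|a_n]⊗a⊗[a_1|…|a_i] with ε_i = Σ_{r=1}^{i}(|a_r|−1), is injective, and its image is exactly Φ(A) := Ker(Δ^R − S_{2341}∘Δ^L). -/
open Finsupp
open scoped Classical

namespace NC

variable (S : Type) [CommRing S] {κ : Type} (dg : κ → ℤ)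

/-- `B(Ā) ⊗ A ⊗ B(Ā)`. -/
abbrev Tch' (κ : Type) (S : Type) [CommRing S] := (List κ × Option κ × List κ) →₀ S

/-- `(B(Ā) ⊗ A ⊗ B(Ā)) ⊗ B(Ā)`. -/
abbrev T4 (κ : Type) (S : Type) [CommRing S] := (List κ × Option κ × List κ × List κ) →₀ S

/-- The right coaction `Δ^R = 1⊗1⊗Δ : BĀ⊗A⊗BĀ → (BĀ⊗A⊗BĀ)⊗BĀ`. -/
noncomputable def coactR : Tch' κ S →ₗ[S] T4 κ S :=
  Finsupp.lift (T4 κ S) S (List κ × Option κ × List κ) fun g =>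
    ∑ i ∈ Finset.range (g.2.2.length + 1),
      Finsupp.single (g.1, g.2.1, g.2.2.take i, g.2.2.drop i) 1

/-- `S_{2341} ∘ Δ^L : BĀ⊗A⊗BĀ → (BĀ⊗A⊗BĀ)⊗BĀ`, with the Koszul sign of the symmetry
moving the first `BĀ`-factor past `BĀ⊗A⊗BĀ`. -/
noncomputable def coactLS : Tch' κ S →ₗ[S] T4 κ S :=
  Finsupp.lift (T4 κ S) S (List κ × Option κ × List κ) fun g =>
    ∑ i ∈ Finset.range (g.1.length + 1),
      sgn S (epsK dg (g.1.take i) *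
          (epsK dg (g.1.drop i) + dgO dg g.2.1 + epsK dg g.2.2)) •
        Finsupp.single (g.1.drop i, g.2.1, g.2.2, g.1.take i) 1

/-- `S_{312} ∘ (1_A ⊗ Δ_{BĀ}) : A ⊗ B(Ā) → B(Ā) ⊗ A ⊗ B(Ā)`,
`a⊗[a₁|…|aₙ] ↦ Σᵢ (−1)^{(ε_i+|a|)(ε_n−ε_i)} [a_{i+1}|…|aₙ]⊗a⊗[a₁|…|a_i]`. -/
noncomputable def iotaMap' : Cch κ S →ₗ[S] Tch' κ S :=
  Finsupp.lift (Tch' κ S) S (Option κ × List κ) fun g =>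
    ∑ i ∈ Finset.range (g.2.length + 1),
      sgn S ((epsK dg (g.2.take i) + dgO dg g.1) * (epsK dg g.2 - epsK dg (g.2.take i))) •
        Finsupp.single (g.2.drop i, g.1, g.2.take i) 1

end NC

namespace NC

theorem sgn_add' {S : Type} [CommRing S] (m n : ℤ) : sgn S (m + n) = sgn S m * sgn S n := by
  unfold sgn
  by_cases hm : Even m <;> by_cases hn : Even n <;> simp [hm, hn, Int.even_add]

theorem sgn_two_mul {S : Type} [CommRing S] (m : ℤ) : sgn S (2 * m) = 1 := by
  simp [sgn]

theorem epsK_append {κ : Type} (dg : κ → ℤ) (x y : List κ) :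
    epsK dg (x ++ y) = epsK dg x + epsK dg y := by
  simp [epsK]

theorem split_iff {κ : Type} (w y z : List κ) (i : ℕ) (hi : i ≤ w.length) :
    (w.take i = y ∧ w.drop i = z) ↔ (w = y ++ z ∧ i = y.length) := by
  constructor
  · rintro ⟨rfl, rfl⟩
    simp [hi]
  · rintro ⟨rfl, rfl⟩
    simp

/-- Summing over the deconcatenations of `w` selects the one equal to `(y, z)`. -/
theorem sum_split {S : Type} [CommRing S] {κ : Type} (w y z : List κ)
    (F : List κ → List κ → S) :
    (∑ i ∈ Finset.range (w.length + 1),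
      if w.take i = y ∧ w.drop i = z then F (w.take i) (w.drop i) else 0)
      = if w = y ++ z then F y z else 0 := by
  by_cases hw : w = y ++ z
  · rw [if_pos hw, Finset.sum_eq_single y.length]
    · subst hw; simp
    · intro i hi hne
      rw [if_neg]
      rw [split_iff _ _ _ _ (by simpa [Nat.lt_succ_iff] using hi)]
      tauto
    · intro h
      exfalso; apply h; subst hw; simp
  · rw [if_neg hw]
    apply Finset.sum_eq_zero
    intro i hi
    rw [if_neg]
    rw [split_iff _ _ _ _ (by simpa [Nat.lt_succ_iff] using hi)]
    tauto

theorem iota_apply {S : Type} [CommRing S] {κ : Type} (dg : κ → ℤ) (f : Cch κ S)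
    (z : List κ) (a : Option κ) (y : List κ) :
    iotaMap' S dg f (z, a, y) =
      sgn S ((epsK dg y + dgO dg a) * epsK dg z) * f (a, y ++ z) := by
  induction f using Finsupp.induction_linear with
  | zero => simp
  | add f g hf hg => rw [map_add, Finsupp.add_apply, hf, hg, ← mul_add, Finsupp.add_apply]
  | single g c =>
    obtain ⟨a', w⟩ := g
    have key := sum_split w y z (fun p q =>
      if a' = a then c * sgn S ((epsK dg p + dgO dg a') * epsK dg q) else 0)
    have h2 : iotaMap' S dg (Finsupp.single (a', w) c) (z, a, y) =
      ∑ i ∈ Finset.range (w.length + 1),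
        if w.take i = y ∧ w.drop i = z then
          (if a' = a then c * sgn S ((epsK dg (w.take i) + dgO dg a') * epsK dg (w.drop i))
            else 0) else 0 := by
      simp only [iotaMap', Finsupp.lift_apply]
      rw [Finsupp.sum_single_index (by simp), Finsupp.smul_apply, Finsupp.finsetSum_apply,
        smul_eq_mul, Finset.mul_sum]
      apply Finset.sum_congr rfl
      intro i _
      have he : epsK dg w - epsK dg (w.take i) = epsK dg (w.drop i) := by
        conv_lhs => rw [← List.take_append_drop i w, epsK_append]
        simp
      rw [he]
      simp only [Finsupp.smul_apply, Finsupp.single_apply, Prod.mk.injEq, smul_eq_mul]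
      by_cases h1 : w.take i = y <;> by_cases h2 : w.drop i = z <;> by_cases h3 : a' = a <;>
        simp [h1, h2, h3]
    rw [h2, key, Finsupp.single_apply]
    by_cases h1 : w = y ++ z <;> by_cases h3 : a' = a <;> simp [h1, h3, mul_comm]

theorem coactR_apply {S : Type} [CommRing S] {κ : Type} (f : Tch' κ S)
    (x : List κ) (a : Option κ) (y z : List κ) :
    coactR S f (x, a, y, z) = f (x, a, y ++ z) := by
  induction f using Finsupp.induction_linear with
  | zero => simp
  | add f g hf hg => rw [map_add, Finsupp.add_apply, hf, hg, Finsupp.add_apply]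
  | single g c =>
    obtain ⟨x', a', w⟩ := g
    have key := sum_split w y z (fun _ _ => if x' = x ∧ a' = a then c else 0)
    have h2 : coactR S (Finsupp.single (x', a', w) c) (x, a, y, z) =
      ∑ i ∈ Finset.range (w.length + 1),
        if w.take i = y ∧ w.drop i = z then
          (if x' = x ∧ a' = a then c else 0) else 0 := by
      simp only [coactR, Finsupp.lift_apply]
      rw [Finsupp.sum_single_index (by simp), Finsupp.smul_apply, Finsupp.finsetSum_apply,
        smul_eq_mul, Finset.mul_sum]
      apply Finset.sum_congr rfl
      intro i _
      simp only [Finsupp.single_apply, Prod.mk.injEq]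
      by_cases h1 : w.take i = y <;> by_cases h2 : w.drop i = z <;> by_cases h3 : a' = a <;>
        by_cases h4 : x' = x <;> simp [h1, h2, h3, h4]
    rw [h2, key, Finsupp.single_apply]
    by_cases h1 : w = y ++ z <;> by_cases h3 : a' = a <;> by_cases h4 : x' = x <;>
      simp [h1, h3, h4]

theorem coactLS_apply {S : Type} [CommRing S] {κ : Type} (dg : κ → ℤ) (f : Tch' κ S)
    (x : List κ) (a : Option κ) (y z : List κ) :
    coactLS S dg f (x, a, y, z) =
      sgn S (epsK dg z * (epsK dg x + dgO dg a + epsK dg y)) * f (z ++ x, a, y) := by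
  induction f using Finsupp.induction_linear with
  | zero => simp
  | add f g hf hg => rw [map_add, Finsupp.add_apply, hf, hg, ← mul_add, Finsupp.add_apply]
  | single g c =>
    obtain ⟨w, a', y'⟩ := g
    have key := sum_split w z x (fun p q => if a' = a ∧ y' = y then
      c * sgn S (epsK dg p * (epsK dg q + dgO dg a' + epsK dg y')) else 0)
    have h2 : coactLS S dg (Finsupp.single (w, a', y') c) (x, a, y, z) =
      ∑ i ∈ Finset.range (w.length + 1),
        if w.take i = z ∧ w.drop i = x then
          (if a' = a ∧ y' = y then
            c * sgn S (epsK dg (w.take i) * (epsK dg (w.drop i) + dgO dg a' + epsK dg y'))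
            else 0) else 0 := by
      simp only [coactLS, Finsupp.lift_apply]
      rw [Finsupp.sum_single_index (by simp), Finsupp.smul_apply, Finsupp.finsetSum_apply,
        smul_eq_mul, Finset.mul_sum]
      apply Finset.sum_congr rfl
      intro i _
      simp only [Finsupp.smul_apply, Finsupp.single_apply, Prod.mk.injEq, smul_eq_mul]
      by_cases h1 : w.take i = z <;> by_cases h2 : w.drop i = x <;> by_cases h3 : a' = a <;>
        by_cases h4 : y' = y <;> simp [h1, h2, h3, h4]
    rw [h2, key, Finsupp.single_apply]
    by_cases h1 : w = z ++ x <;> by_cases h3 : a' = a <;> by_cases h4 : y' = y <;>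
      simp [h1, h3, h4, mul_comm]

end NC

open NC in
/-- Let `(A,b)` be a unital curved A∞-algebra over a field `k` of characteristic
`0` and `Ā = A/k·1_A`.  The map `S_{312}∘(1_A⊗Δ_{BĀ}) : A⊗BĀ → BĀ⊗A⊗BĀ`, which sends
`a⊗[a₁|…|aₙ]` to `Σᵢ (−1)^{(ε_i+|a|)(ε_n−ε_i)} [a_{i+1}|…|aₙ]⊗a⊗[a₁|…|a_i]`, is injective,
and its image is exactly `Φ(A) := Ker(Δ^R − S_{2341}∘Δ^L)`. -/
theorem statement4 {k : Type} [Field k] [CharZero k] {κ : Type} (dg : κ → ℤ)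
    (b : List (Option κ) → Avs κ k) (hb : IsUnitalCurvedAInf k dg b) :
    Function.Injective (iotaMap' k dg (κ := κ)) ∧
      LinearMap.range (iotaMap' k dg (κ := κ)) =
        LinearMap.ker (coactR k (κ := κ) - coactLS k dg) := by
  have e0 : epsK dg ([] : List κ) = 0 := by simp [epsK]
  have s0 : sgn k 0 = 1 := by simp [sgn]
  refine ⟨?_, ?_⟩
  · intro f g hfg
    ext ⟨a, w⟩
    have h := DFunLike.congr_fun hfg (([] : List κ), a, w)
    rw [iota_apply, iota_apply] at h
    simpa [e0, s0] using h
  · ext f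
    rw [LinearMap.mem_range, LinearMap.mem_ker, LinearMap.sub_apply, sub_eq_zero]
    constructor
    · rintro ⟨g, rfl⟩
      ext ⟨x, a, y, z⟩
      rw [coactR_apply, coactLS_apply, iota_apply, iota_apply, ← mul_assoc, ← sgn_add',
        epsK_append, epsK_append, List.append_assoc]
      congr 1
      rw [show epsK dg z * (epsK dg x + dgO dg a + epsK dg y) +
          (epsK dg y + dgO dg a) * (epsK dg z + epsK dg x) =
          (epsK dg y + epsK dg z + dgO dg a) * epsK dg x +
            2 * (epsK dg z * (epsK dg y + dgO dg a)) by ring, sgn_add', sgn_two_mul, mul_one]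
    · intro hf
      have hinj : Function.Injective
          (fun p : Option κ × List κ => (([] : List κ), p.1, p.2)) := by
        rintro ⟨a, w⟩ ⟨a', w'⟩ h
        simpa using h
      refine ⟨Finsupp.comapDomain _ f hinj.injOn, ?_⟩
      ext ⟨z, a, y⟩
      rw [iota_apply, Finsupp.comapDomain_apply]
      have h := DFunLike.congr_fun hf (([] : List κ), a, y, z)
      rw [coactR_apply, coactLS_apply] at h
      simp only [h, List.append_nil, e0]
      rw [← mul_assoc, ← sgn_add',
        show (epsK dg y + dgO dg a) * epsK dg z +
          epsK dg z * (0 + dgO dg a + epsK dg y) =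
          2 * (epsK dg z * (epsK dg y + dgO dg a)) by ring, sgn_two_mul, one_mul]
end
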